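/- Let n : ℕ and a : Fin n → Fin 4, and suppose there is exactly one index k : Fin n with a k ≠ 0 (a is a weight-one nonidentity Pauli string). Let X⁽ⁿ⁾ = P_{fun _ => 1} (the n-fold tensor of X) and Z⁽ⁿ⁾ = P_{fun _ => 3} (the n-fold tensor of Z). Then P_a * X⁽ⁿ⁾ = -(X⁽ⁿ⁾ * P_a) or P_a * Z⁽ⁿ⁾ = -(Z⁽ⁿ⁾ * P_a); that is, every weight-one nonidentity Pauli string anticommutes with X^{⊗n} or with Z^{⊗n}. -/

import Mathlib

open Matrix Complex Kronecker

noncomputable def pauli : Fin 4 → Matrix (Fin 2) (Fin 2) ℂ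
  | 0 => !![1, 0; 0, 1]
  | 1 => !![0, 1; 1, 0]
  | 2 => !![0, -Complex.I; Complex.I, 0]
  | 3 => !![1, 0; 0, -1]

noncomputable def PauliString {n : ℕ} (a : Fin n → Fin 4) :
    Matrix (Fin n → Fin 2) (Fin n → Fin 2) ℂ :=
  Matrix.of fun f g => ∏ i, pauli (a i) (f i) (g i)

theorem pauliString_mul_apply {n : ℕ} (a b : Fin n → Fin 4) (f g : Fin n → Fin 2) :
    (PauliString a * PauliString b) f g =
      ∏ i, (pauli (a i) * pauli (b i)) (f i) (g i) := by
  simp only [Matrix.mul_apply, PauliString, Matrix.of_apply, ← Finset.prod_mul_distrib]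
  rw [Finset.prod_univ_sum, Fintype.piFinset_univ]

theorem pauliString_anticomm {n : ℕ} (a : Fin n → Fin 4) (c : Fin 4) (k : Fin n)
    (hk : pauli (a k) * pauli c = -(pauli c * pauli (a k)))
    (h : ∀ i, i ≠ k → a i = 0) :
    PauliString a * PauliString (fun _ : Fin n => c) =
      -(PauliString (fun _ : Fin n => c) * PauliString a) := by
  have h0 : pauli 0 = 1 := by simp [pauli, Matrix.one_fin_two]
  ext f g
  rw [Matrix.neg_apply, pauliString_mul_apply, pauliString_mul_apply,
    ← Finset.mul_prod_erase _ _ (Finset.mem_univ k),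
    ← Finset.mul_prod_erase _ _ (Finset.mem_univ k), hk, Matrix.neg_apply, neg_mul]
  congr 2
  refine Finset.prod_congr rfl fun i hi => ?_
  rw [h i (Finset.ne_of_mem_erase hi), h0, one_mul, mul_one]

theorem weight_one_anticommutes_with_Xn_or_Zn (n : ℕ) (a : Fin n → Fin 4)
    (hw : ∃! k : Fin n, a k ≠ 0) :
    PauliString a * PauliString (fun _ : Fin n => (1 : Fin 4)) =
        -(PauliString (fun _ : Fin n => (1 : Fin 4)) * PauliString a) ∨
      PauliString a * PauliString (fun _ : Fin n => (3 : Fin 4)) =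
        -(PauliString (fun _ : Fin n => (3 : Fin 4)) * PauliString a) := by
  obtain ⟨k, hk, hu⟩ := hw
  have h : ∀ i, i ≠ k → a i = 0 := fun i hi => by
    by_contra hc
    exact hi (hu i hc)
  by_cases h1 : a k = 1
  · right
    refine pauliString_anticomm a 3 k ?_ h
    rw [h1]
    simp [pauli]
  · left
    refine pauliString_anticomm a 1 k ?_ h
    have h23 : a k = 2 ∨ a k = 3 := by
      omega
    rcases h23 with h2 | h2 <;> rw [h2] <;> simp [pauli]
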